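/- Fix l, r ∈ ℝ and let α, β, γ be built from c := |l| + |r|. Assume there exists a real-valued absolutely continuous function g on [a,b] with g(a) = g(b) = 0, ∫ₐᵇ p|g'|² < ∞, and g(x)w(x) > 0 a.e. on (a,b), and let ε > 0 satisfy μ_{1/p}({x ∈ [a,b] : p(x)g(x)w(x) < ε}) ≤ 1/(2γ²). Then every real λ ≠ 0 for which there exists a solution (φ, u) of −(pφ')' + qφ = λwφ with φ not identically zero, u(a) = l·φ(a), u(b) = r·φ(b), and λ·∫ₐᵇ w|φ|² ≤ 0 (a real exceptional eigenvalue), satisfies |λ| ≤ (2/ε)·(β·γ·‖g'‖_{p,2} + (β² + γ²‖q‖_{L¹})·‖g‖_∞). -/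

import Mathlib

open MeasureTheory Real Complex

open Set in
/-- `F` is a primitive of the integrable function `f` on `[a,b]`. -/
def IsPrim (a b : ℝ) (F f : ℝ → ℝ) : Prop :=
  IntegrableOn f (Set.Ioc a b) ∧ ∀ x ∈ Set.Icc a b, F x = F a + ∫ t in a..x, f t

lemma IsPrim.intInt {a b : ℝ} (hab : a < b) {F f : ℝ → ℝ} (h : IsPrim a b F f) :
    IntervalIntegrable f volume a b :=
  (intervalIntegrable_iff_integrableOn_Ioc_of_le hab.le).2 h.1

lemma IsPrim.ac {a b : ℝ} (hab : a < b) {F f : ℝ → ℝ} (h : IsPrim a b F f) :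
    AbsolutelyContinuousOnInterval (fun x => F a + ∫ t in a..x, f t) a b := by
  have h1 := (h.intInt hab).absolutelyContinuousOnInterval_intervalIntegral (c := a) (by simp)
  have h2 : AbsolutelyContinuousOnInterval (fun _ : ℝ => F a) a b :=
    (LipschitzWith.const (F a)).lipschitzOnWith.absolutelyContinuousOnInterval
  exact h2.add h1

lemma IsPrim.cont {a b : ℝ} (hab : a < b) {F f : ℝ → ℝ} (h : IsPrim a b F f) :
    ContinuousOn F (Set.Icc a b) := by
  have := (h.ac hab).continuousOn
  rw [Set.uIcc_of_le hab.le] at this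
  exact this.congr h.2

lemma IsPrim.mono {a b c : ℝ} {F f : ℝ → ℝ} (h : IsPrim a b F f) (hc : c ∈ Set.Icc a b) :
    IsPrim a c F f :=
  ⟨h.1.mono_set (Set.Ioc_subset_Ioc_right hc.2), fun x hx => h.2 x ⟨hx.1, hx.2.trans hc.2⟩⟩

lemma IsPrim.mul_end {a b : ℝ} (hab : a < b) {F f G g : ℝ → ℝ}
    (hF : IsPrim a b F f) (hG : IsPrim a b G g) :
    ∫ t in a..b, (f t * G t + F t * g t) = F b * G b - F a * G a := by
  have h := (hF.ac hab).integral_deriv_mul_eq_sub (hG.ac hab)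
  simp only [intervalIntegral.integral_same, add_zero] at h
  rw [← hF.2 b ⟨hab.le, le_rfl⟩, ← hG.2 b ⟨hab.le, le_rfl⟩] at h
  rw [← h]
  apply intervalIntegral.integral_congr_ae
  filter_upwards [(hF.intInt hab).ae_hasDerivAt_integral, (hG.intInt hab).ae_hasDerivAt_integral]
    with x h1 h2 hx
  have hx' := Set.uIoc_subset_uIcc hx
  have d1 := ((h1 hx' a (by simp)).const_add (F a)).deriv
  have d2 := ((h2 hx' a (by simp)).const_add (G a)).deriv
  rw [Set.uIcc_of_le hab.le] at hx'
  rw [d1, d2, ← hF.2 x hx', ← hG.2 x hx']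

lemma intOn_mul_cont {a b : ℝ} {f G : ℝ → ℝ} (hf : IntegrableOn f (Set.Ioc a b))
    (hG : ContinuousOn G (Set.Icc a b)) : IntegrableOn (fun x => f x * G x) (Set.Ioc a b) := by
  have h : IntegrableOn f (Set.Icc a b) := (integrableOn_Icc_iff_integrableOn_Ioc (by simp)).2 hf
  exact (h.mul_continuousOn hG isCompact_Icc).mono_set Set.Ioc_subset_Icc_self

lemma IsPrim.mul {a b : ℝ} (hab : a < b) {F f G g : ℝ → ℝ}
    (hF : IsPrim a b F f) (hG : IsPrim a b G g) :
    IsPrim a b (fun x => F x * G x) (fun t => f t * G t + F t * g t) := by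
  refine ⟨(intOn_mul_cont hF.1 (hG.cont hab)).add ?_, fun x hx => ?_⟩
  · have := intOn_mul_cont hG.1 (hF.cont hab)
    simpa only [mul_comm] using this
  · rcases hx.1.eq_or_lt with h | h
    · subst h; simp
    · rw [(hF.mono hx).mul_end h (hG.mono hx)]; ring

lemma IsPrim.add {a b : ℝ} (hab : a < b) {F f G g : ℝ → ℝ}
    (hF : IsPrim a b F f) (hG : IsPrim a b G g) :
    IsPrim a b (fun x => F x + G x) (fun t => f t + g t) := by
  refine ⟨hF.1.add hG.1, fun x hx => ?_⟩
  rcases hx.1.eq_or_lt with h | h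
  · subst h; simp
  · simp only
    rw [intervalIntegral.integral_add ((hF.mono hx).intInt h) ((hG.mono hx).intInt h),
      hF.2 x hx, hG.2 x hx]; ring

lemma isPrim_re_im {a b : ℝ} {F f : ℝ → ℂ} (hf : IntegrableOn f (Set.Ioc a b))
    (h : ∀ x ∈ Set.Icc a b, F x = F a + ∫ t in a..x, f t) :
    IsPrim a b (fun x => (F x).re) (fun x => (f x).re) ∧
      IsPrim a b (fun x => (F x).im) (fun x => (f x).im) := by
  have hi : ∀ x ∈ Set.Icc a b, IntegrableOn f (Set.Ioc a x) := fun x hx =>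
    hf.mono_set (Set.Ioc_subset_Ioc_right hx.2)
  refine ⟨⟨hf.re, fun x hx => ?_⟩, ⟨hf.im, fun x hx => ?_⟩⟩
  · have e : (F x).re = (F a + ∫ t in a..x, f t).re := by rw [← h x hx]
    simp only [e]
    rw [Complex.add_re, intervalIntegral.integral_of_le hx.1, intervalIntegral.integral_of_le hx.1]
    congr 1
    exact (integral_re (hi x hx)).symm
  · have e : (F x).im = (F a + ∫ t in a..x, f t).im := by rw [← h x hx]
    simp only [e]
    rw [Complex.add_im, intervalIntegral.integral_of_le hx.1, intervalIntegral.integral_of_le hx.1]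
    congr 1
    exact (integral_im (hi x hx)).symm

lemma cs_int {μ : Measure ℝ} {A B h : ℝ → ℝ} (hA : Integrable A μ) (hB : Integrable B μ)
    (hh : Integrable h μ) (hle : ∀ᵐ x ∂μ, 0 ≤ A x ∧ 0 ≤ B x ∧ h x ^ 2 ≤ A x * B x) :
    ∫ x, |h x| ∂μ ≤ √(∫ x, A x ∂μ) * √(∫ x, B x ∂μ) := by
  have key : ∀ t : ℝ, 0 ≤ (∫ x, A x ∂μ) * (t * t) + (-2 * ∫ x, |h x| ∂μ) * t + ∫ x, B x ∂μ := by
    intro t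
    have : (∫ x, A x ∂μ) * (t * t) + (-2 * ∫ x, |h x| ∂μ) * t + ∫ x, B x ∂μ
        = ∫ x, (A x * (t * t) + |h x| * (-2 * t) + B x) ∂μ := by
      rw [integral_add (f := fun x => A x * (t * t) + |h x| * (-2 * t))
        ((hA.mul_const _).add (hh.abs.mul_const _)) hB,
        integral_add (hA.mul_const _) (hh.abs.mul_const _), integral_mul_const,
        integral_mul_const]
      ring
    rw [this]
    apply integral_nonneg_of_ae
    filter_upwards [hle] with x ⟨h1, h2, h3⟩
    have h4 : |h x| ≤ √(A x) * √(B x) := by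
      rw [← Real.sqrt_mul h1]; exact Real.abs_le_sqrt h3
    have e1 := Real.sq_sqrt h1
    have e2 := Real.sq_sqrt h2
    have s1 := Real.sqrt_nonneg (A x)
    have s2 := Real.sqrt_nonneg (B x)
    simp only [Pi.zero_apply]
    rcases le_total 0 t with ht | ht
    · nlinarith [sq_nonneg (√(A x) * t - √(B x)), mul_le_mul_of_nonneg_right h4 ht]
    · nlinarith [sq_nonneg (√(A x) * t + √(B x)), mul_nonneg (abs_nonneg (h x)) (neg_nonneg.2 ht),
        mul_nonneg (mul_nonneg s1 s2) (neg_nonneg.2 ht)]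
  have hd := discrim_le_zero key
  unfold discrim at hd
  have hA0 : 0 ≤ ∫ x, A x ∂μ := integral_nonneg_of_ae (hle.mono fun x hx => hx.1)
  rw [← Real.sqrt_mul hA0]
  apply Real.le_sqrt_of_sq_le
  nlinarith

set_option maxHeartbeats 1000000 in
/-- The analytic core. -/
lemma core_bound {μ : Measure ℝ} [IsFiniteMeasure μ] (p q w f k U g g' : ℝ → ℝ) (I : Set ℝ)
    (hI : ∀ᵐ x ∂μ, x ∈ I)
    (hp : ∀ᵐ x ∂μ, 0 < p x) (P : ℝ) (hP : P = ∫ x, 1 / p x ∂μ) (hP0 : 0 < P)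
    (hpi : Integrable (fun x => 1 / p x) μ)
    (hq : Integrable q μ)
    (hfp : Integrable (fun x => 1 / p x * f x) μ)
    (hUp : Integrable (fun x => 1 / p x * U x) μ)
    (hkp : Integrable (fun x => 1 / p x * k x) μ)
    (hqf : Integrable (fun x => q x * f x) μ)
    (hwf : Integrable (fun x => w x * f x) μ)
    (hgqf : Integrable (fun x => q x * f x * g x) μ)
    (hgwf : Integrable (fun x => w x * f x * g x) μ)
    (hgU : Integrable (fun x => 1 / p x * U x * g x) μ)
    (hgk : Integrable (fun x => g' x * k x) μ)
    (hg2 : Integrable (fun x => p x * g' x ^ 2) μ)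
    (hf0 : ∀ x, 0 ≤ f x) (hU0 : ∀ x, 0 ≤ U x) (hkfU : ∀ x, k x ^ 2 ≤ f x * U x)
    (lam l r fa fb α β γ M B : ℝ)
    (hM : ∀ x ∈ I, f x ≤ M) (hM0 : 0 < M) (x₀ : ℝ) (hx₀ : x₀ ∈ I) (hx₀M : f x₀ = M)
    (hfa : 0 ≤ fa) (hfb : 0 ≤ fb) (hfaM : fa ≤ M) (hfbM : fb ≤ M)
    (hB : ∀ x ∈ I, |g x| ≤ B)
    (hosc : ∀ x ∈ I, ∀ y ∈ I, f x - f y ≤ 2 * ∫ t, |1 / p t * k t| ∂μ)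
    (hα : α = |l| + |r| + ∫ t, |min (q t) 0| ∂μ)
    (hβ : β = √(α * (1 / P + α)) + α) (hγ : γ = √(2 * β + 1 / P))
    (h1 : (∫ x, 1 / p x * U x ∂μ) + (∫ x, q x * f x ∂μ) - lam * (∫ x, w x * f x ∂μ)
      = r * fb - l * fa)
    (h2 : (∫ x, g' x * k x ∂μ) + (∫ x, q x * f x * g x ∂μ) - lam * (∫ x, w x * f x * g x ∂μ)
      + (∫ x, 1 / p x * U x * g x ∂μ) = 0)
    (hlam : lam * (∫ x, w x * f x ∂μ) ≤ 0) (ε : ℝ) (hε : 0 < ε)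
    (S : Set ℝ) (hS : MeasurableSet S) (hSp : ∀ᵐ x ∂μ, x ∉ S → ε ≤ p x * g x * w x)
    (hgw : ∀ᵐ x ∂μ, 0 < g x * w x)
    (hSm : ∫ x, S.indicator (fun x => 1 / p x) x ∂μ ≤ 1 / (2 * γ ^ 2)) :
    |lam| ≤ 2 / ε * (β * γ * √(∫ x, p x * g' x ^ 2 ∂μ) + (β ^ 2 + γ ^ 2 * ∫ x, |q x| ∂μ) * B) := by
  set D2 := ∫ x, 1 / p x * U x ∂μ with hD2
  set N2 := ∫ x, 1 / p x * f x ∂μ with hN2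
  set G2 := ∫ x, p x * g' x ^ 2 ∂μ with hG2
  set W := ∫ x, w x * f x * g x ∂μ with hW
  set Q := ∫ x, |q x| ∂μ with hQ
  have hD20 : 0 ≤ D2 := integral_nonneg_of_ae (hp.mono fun x hx => by
    have := hU0 x; simp only [Pi.zero_apply]; positivity)
  have hN20 : 0 ≤ N2 := integral_nonneg_of_ae (hp.mono fun x hx => by
    have := hf0 x; simp only [Pi.zero_apply]; positivity)
  have hG20 : 0 ≤ G2 := integral_nonneg_of_ae (hp.mono fun x hx => by
    simp only [Pi.zero_apply]; positivity)
  have hQ0 : 0 ≤ Q := integral_nonneg fun x => abs_nonneg _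
  have hmin : Integrable (fun t => |min (q t) 0|) μ := by
    have := (hq.neg_part)
    refine this.congr (Filter.Eventually.of_forall fun x => ?_)
    simp only
    rcases le_total (q x) 0 with h | h
    · simp [h, abs_of_nonpos h]
    · simp [h]
  have hm0 : 0 ≤ ∫ t, |min (q t) 0| ∂μ := integral_nonneg fun x => abs_nonneg _
  have hα0 : 0 ≤ α := by rw [hα]; positivity
  have hβ0 : 0 ≤ β := by rw [hβ]; positivity
  have hγ2 : γ ^ 2 = 2 * β + 1 / P := by rw [hγ]; exact Real.sq_sqrt (by positivity)
  have hγ0 : 0 < γ := by rw [hγ]; positivity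
  have hB0 : 0 ≤ B := (abs_nonneg _).trans (hB x₀ hx₀)
  -- step 1
  have s1 : D2 ≤ α * M := by
    have : -(∫ x, q x * f x ∂μ) ≤ (∫ t, |min (q t) 0| ∂μ) * M := by
      rw [← integral_neg, ← integral_mul_const]
      refine integral_mono_ae hqf.neg (hmin.mul_const _) ?_
      filter_upwards [hI] with x hx
      have a1 := hM x hx
      have a2 := hf0 x
      rcases le_total (q x) 0 with h | h
      · simp only [min_eq_left h, abs_of_nonpos h]; nlinarith
      · simp only [min_eq_right h, abs_zero]; nlinarith
    have b1 : r * fb ≤ |r| * M := by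
      calc r * fb ≤ |r| * fb := mul_le_mul_of_nonneg_right (le_abs_self r) hfb
        _ ≤ _ := mul_le_mul_of_nonneg_left hfbM (abs_nonneg r)
    have b2 : -(l * fa) ≤ |l| * M := by
      calc -(l * fa) = (-l) * fa := by ring
        _ ≤ |l| * fa := mul_le_mul_of_nonneg_right (neg_le_abs l) hfa
        _ ≤ _ := mul_le_mul_of_nonneg_left hfaM (abs_nonneg l)
    rw [hα]; nlinarith
  -- step 2
  have cs1 : ∫ t, |1 / p t * k t| ∂μ ≤ √N2 * √D2 := by
    refine cs_int hfp hUp hkp ?_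
    filter_upwards [hp] with x hx
    have a1 := hf0 x
    have a2 := hU0 x
    refine ⟨by positivity, by positivity, ?_⟩
    have := mul_le_mul_of_nonneg_left (hkfU x) (show 0 ≤ (1 / p x) ^ 2 by positivity)
    calc (1 / p x * k x) ^ 2 = (1 / p x) ^ 2 * k x ^ 2 := by ring
      _ ≤ _ := this
      _ = _ := by ring
  have s2 : M * P ≤ N2 + 2 * (√N2 * √D2) * P := by
    have : ∫ x, 1 / p x * M ∂μ ≤ ∫ x, (1 / p x * f x + 1 / p x * (2 * (√N2 * √D2))) ∂μ := by
      refine integral_mono_ae (hpi.mul_const _) (hfp.add (hpi.mul_const _)) ?_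
      filter_upwards [hp, hI] with x hx hxI
      have a1 := hosc x₀ hx₀ x hxI
      rw [hx₀M] at a1
      have : M ≤ f x + 2 * (√N2 * √D2) := by linarith
      rw [← mul_add]
      exact mul_le_mul_of_nonneg_left this (by positivity)
    rw [integral_add hfp (hpi.mul_const _), integral_mul_const, integral_mul_const, ← hP] at this
    linarith
  set D := √D2 with hD
  set N := √N2 with hN
  have eD : D ^ 2 = D2 := Real.sq_sqrt hD20
  have eN : N ^ 2 = N2 := Real.sq_sqrt hN20
  have hDn : 0 ≤ D := Real.sqrt_nonneg _
  have hNn : 0 ≤ N := Real.sqrt_nonneg _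
  have s2' : M ≤ N ^ 2 * (1 / P) + 2 * N * D := by
    rw [eN]
    have : M = M * P * (1 / P) := by field_simp
    rw [this]
    have h3 := mul_le_mul_of_nonneg_right s2 (show 0 ≤ 1 / P by positivity)
    have : (N2 + 2 * (N * D) * P) * (1 / P) = N2 * (1 / P) + 2 * N * D := by field_simp
    linarith
  have s3 : D ≤ β * N := by
    have h3 : D ^ 2 ≤ α * (N ^ 2 * (1 / P) + 2 * N * D) := by
      rw [eD]; exact s1.trans (mul_le_mul_of_nonneg_left s2' hα0)
    have h4 : (D - α * N) ^ 2 ≤ (√(α * (1 / P + α)) * N) ^ 2 := by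
      rw [mul_pow, Real.sq_sqrt (by positivity)]; nlinarith
    have h5 := abs_le_of_sq_le_sq h4 (by positivity)
    rw [hβ]; linarith [le_of_abs_le h5]
  have s4 : M ≤ γ ^ 2 * N ^ 2 := by
    rw [hγ2]; nlinarith [mul_le_mul_of_nonneg_left s3 hNn]
  have hNpos : 0 < N ^ 2 := by
    by_contra hc
    have : N ^ 2 = 0 := le_antisymm (not_lt.1 hc) (sq_nonneg N)
    rw [this] at s4; linarith
  -- step 3
  have s5 : ε / 2 * N ^ 2 ≤ W := by
    have hind : Integrable (fun x => S.indicator (fun x => 1 / p x) x) μ := hpi.indicator hS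
    have : N2 ≤ ∫ x, (S.indicator (fun x => 1 / p x) x * M + w x * f x * g x * (1 / ε)) ∂μ := by
      refine integral_mono_ae hfp ((hind.mul_const _).add (hgwf.mul_const _)) ?_
      filter_upwards [hp, hI, hSp, hgw] with x hx hxI hxS hxg
      have a1 := hf0 x
      have a2 := hM x hxI
      by_cases hs : x ∈ S
      · simp only [Set.indicator_of_mem hs]
        have : 0 ≤ w x * f x * g x * (1 / ε) := by
          have : w x * f x * g x * (1 / ε) = g x * w x * f x * (1 / ε) := by ring
          rw [this]; positivity
        have := mul_le_mul_of_nonneg_left a2 (show 0 ≤ 1 / p x by positivity)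
        linarith
      · simp only [Set.indicator_of_notMem hs, zero_mul, zero_add]
        have h6 := hxS hs
        have h7 : 1 / p x ≤ g x * w x * (1 / ε) := by
          rw [mul_one_div, div_le_div_iff₀ hx hε]; linarith
        have := mul_le_mul_of_nonneg_right h7 a1
        linarith
    rw [integral_add (hind.mul_const _) (hgwf.mul_const _), integral_mul_const,
      integral_mul_const] at this
    have h8 : (∫ x, S.indicator (fun x => 1 / p x) x ∂μ) * M ≤ N ^ 2 / 2 := by
      calc _ ≤ 1 / (2 * γ ^ 2) * M := mul_le_mul_of_nonneg_right hSm hM0.le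
        _ ≤ 1 / (2 * γ ^ 2) * (γ ^ 2 * N ^ 2) := mul_le_mul_of_nonneg_left s4 (by positivity)
        _ = N ^ 2 / 2 := by field_simp
    have h9 : N ^ 2 / 2 ≤ W * (1 / ε) := by linarith
    have h10 := mul_le_mul_of_nonneg_right h9 hε.le
    have : W * (1 / ε) * ε = W := by field_simp
    linarith
  -- step 4
  have t1 : |∫ x, g' x * k x ∂μ| ≤ β * γ * √G2 * N ^ 2 := by
    have h3 : |∫ x, g' x * k x ∂μ| ≤ ∫ x, |g' x * k x| ∂μ := abs_integral_le_integral_abs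
    have h4 : ∫ x, |g' x * k x| ∂μ ≤ √(∫ x, p x * g' x ^ 2 * M ∂μ) * √D2 := by
      refine cs_int (hg2.mul_const _) hUp hgk ?_
      filter_upwards [hp, hI] with x hx hxI
      have a1 := hf0 x
      have a2 := hU0 x
      have a3 := hM x hxI
      refine ⟨by positivity, by positivity, ?_⟩
      have e : p x * g' x ^ 2 * M * (1 / p x * U x) = g' x ^ 2 * (M * U x) := by field_simp
      rw [e, mul_pow]
      exact mul_le_mul_of_nonneg_left ((hkfU x).trans (mul_le_mul_of_nonneg_right a3 a2))
        (sq_nonneg _)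
    rw [integral_mul_const, ← hG2, Real.sqrt_mul hG20] at h4
    have h5 : √M ≤ γ * N := by
      rw [Real.sqrt_le_left (by positivity), mul_pow]; exact s4
    calc _ ≤ √G2 * √M * D := h3.trans h4
      _ ≤ √G2 * (γ * N) * (β * N) := by gcongr
      _ = _ := by ring
  have t2 : |∫ x, q x * f x * g x ∂μ| ≤ γ ^ 2 * Q * B * N ^ 2 := by
    have h3 : |∫ x, q x * f x * g x ∂μ| ≤ ∫ x, |q x * f x * g x| ∂μ := abs_integral_le_integral_abs
    have h4 : ∫ x, |q x * f x * g x| ∂μ ≤ ∫ x, |q x| * (M * B) ∂μ := by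
      refine integral_mono_ae hgqf.abs (hq.abs.mul_const _) ?_
      filter_upwards [hI] with x hxI
      simp only [abs_mul, mul_assoc]
      rw [abs_of_nonneg (hf0 x)]
      have := hM x hxI
      have := hB x hxI
      have := hf0 x
      gcongr
    rw [integral_mul_const] at h4
    calc _ ≤ Q * (M * B) := h3.trans h4
      _ ≤ Q * (γ ^ 2 * N ^ 2 * B) := by gcongr
      _ = _ := by ring
  have t3 : |∫ x, 1 / p x * U x * g x ∂μ| ≤ β ^ 2 * B * N ^ 2 := by
    have h3 : |∫ x, 1 / p x * U x * g x ∂μ| ≤ ∫ x, |1 / p x * U x * g x| ∂μ :=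
      abs_integral_le_integral_abs
    have h4 : ∫ x, |1 / p x * U x * g x| ∂μ ≤ ∫ x, 1 / p x * U x * B ∂μ := by
      refine integral_mono_ae hgU.abs (hUp.mul_const _) ?_
      filter_upwards [hI, hp] with x hxI hx
      have a0 := hU0 x
      have a1 : 0 ≤ 1 / p x * U x := by positivity
      rw [abs_mul, abs_of_nonneg a1]
      exact mul_le_mul_of_nonneg_left (hB x hxI) a1
    rw [integral_mul_const] at h4
    calc _ ≤ D2 * B := h3.trans h4
      _ = D ^ 2 * B := by rw [eD]
      _ ≤ (β * N) ^ 2 * B := by gcongr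
      _ = _ := by ring
  have t4 : |lam| * (ε / 2 * N ^ 2) ≤
      (β * γ * √G2 + (β ^ 2 + γ ^ 2 * Q) * B) * N ^ 2 := by
    have hW0 : 0 ≤ W := le_trans (by positivity) s5
    have e : lam * W = (∫ x, g' x * k x ∂μ) + (∫ x, q x * f x * g x ∂μ)
      + (∫ x, 1 / p x * U x * g x ∂μ) := by linarith
    calc |lam| * (ε / 2 * N ^ 2) ≤ |lam| * W := mul_le_mul_of_nonneg_left s5 (abs_nonneg _)
      _ = |lam * W| := by rw [abs_mul, abs_of_nonneg hW0]
      _ ≤ _ := by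
        rw [e]
        refine (abs_add_three _ _ _).trans ?_
        linarith
  have t5 : |lam| * (ε / 2) ≤ β * γ * √G2 + (β ^ 2 + γ ^ 2 * Q) * B :=
    le_of_mul_le_mul_right (by linarith) hNpos
  calc |lam| = 2 / ε * (|lam| * (ε / 2)) := by field_simp
    _ ≤ _ := mul_le_mul_of_nonneg_left t5 (by positivity)


set_option maxHeartbeats 1000000 in
/-- Theorem 4.3 of the paper (for separated self-adjoint boundary conditions):
bound on the real exceptional eigenvalues of the indefinite
Sturm–Liouville problem. -/
theorem exceptional_eigenvalue_bounds_separated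
    (a b : ℝ) (hab : a < b) (p q w : ℝ → ℝ)
    (hpm : Measurable p) (hqm : Measurable q) (hwm : Measurable w)
    (hp_pos : ∀ᵐ x ∂(volume.restrict (Set.Ioc a b)), 0 < p x)
    (hp_int : IntegrableOn (fun x => 1 / p x) (Set.Ioc a b))
    (hq_int : IntegrableOn q (Set.Ioc a b))
    (hw_int : IntegrableOn w (Set.Ioc a b))
    (hw_ne : ∀ᵐ x ∂(volume.restrict (Set.Ioc a b)), w x ≠ 0)
    (hw_pos : 0 < volume {x ∈ Set.Ioc a b | 0 < w x})
    (hw_neg : 0 < volume {x ∈ Set.Ioc a b | w x < 0})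
    (l r : ℝ) (c α β γ : ℝ)
    (hc : c = |l| + |r|)
    (hα : α = c + ∫ t in a..b, |min (q t) 0|)
    (hβ : β = Real.sqrt (α * (1 / (∫ t in a..b, 1 / p t) + α)) + α)
    (hγ : γ = Real.sqrt (2 * β + 1 / (∫ t in a..b, 1 / p t)))
    -- the comparison function g, absolutely continuous with a.e. derivative g'
    (g g' : ℝ → ℝ) (hg'm : Measurable g')
    (hg'int : IntegrableOn g' (Set.Icc a b))
    (hgAC : ∀ x ∈ Set.Icc a b, g x = g a + ∫ t in a..x, g' t)
    (hga : g a = 0) (hgb : g b = 0)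
    (hg'2 : IntegrableOn (fun t => p t * g' t ^ 2) (Set.Ioc a b))
    (hgw : ∀ᵐ x ∂(volume.restrict (Set.Ioc a b)), 0 < g x * w x)
    (ε : ℝ) (hε : 0 < ε)
    (hεcond : (volume.withDensity fun x => ENNReal.ofReal (1 / p x))
        {x | x ∈ Set.Icc a b ∧ p x * g x * w x < ε} ≤ ENNReal.ofReal (1 / (2 * γ ^ 2))) :
    ∀ lam : ℝ, lam ≠ 0 →
      ∀ φ u : ℝ → ℂ,
        ContinuousOn φ (Set.Icc a b) → ContinuousOn u (Set.Icc a b) →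
        (∀ x ∈ Set.Icc a b, φ x = φ a + ∫ t in a..x, u t / (p t : ℂ)) →
        (∀ x ∈ Set.Icc a b,
            u x = u a + ∫ t in a..x, ((q t : ℂ) - (lam : ℂ) * (w t : ℂ)) * φ t) →
        (∃ x ∈ Set.Icc a b, φ x ≠ 0) →
        u a = (l : ℂ) * φ a → u b = (r : ℂ) * φ b →
        lam * (∫ t in a..b, w t * ‖φ t‖ ^ 2) ≤ 0 →
        |lam| ≤ 2 / ε *
            (β * γ * Real.sqrt (∫ t in a..b, p t * g' t ^ 2)
              + (β ^ 2 + γ ^ 2 * ∫ t in a..b, |q t|)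
                  * sSup ((fun x => |g x|) '' Set.Icc a b)) := by
  intro lam hlam0 φ u hφc huc hφ hu hne hua hub hlamw
  have hac : a ∈ Set.Icc a b := ⟨le_rfl, hab.le⟩
  have hbc : b ∈ Set.Icc a b := ⟨hab.le, le_rfl⟩
  have toIcc : ∀ {h : ℝ → ℂ}, IntegrableOn h (Set.Ioc a b) → ∀ {G : ℝ → ℂ},
      ContinuousOn G (Set.Icc a b) → IntegrableOn (fun x => h x * G x) (Set.Ioc a b) := by
    intro h hh G hG
    have h1 : IntegrableOn h (Set.Icc a b) := (integrableOn_Icc_iff_integrableOn_Ioc (by simp)).2 hh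
    exact (h1.mul_continuousOn hG isCompact_Icc).mono_set Set.Ioc_subset_Icc_self
  have hi1 : IntegrableOn (fun t => u t / (p t : ℂ)) (Set.Ioc a b) := by
    refine (toIcc hp_int.ofReal huc).congr (Filter.Eventually.of_forall fun t => ?_)
    simp [div_eq_inv_mul]
  have hi2 : IntegrableOn (fun t => ((q t : ℂ) - (lam : ℂ) * (w t : ℂ)) * φ t) (Set.Ioc a b) := by
    refine toIcc ?_ hφc
    exact hq_int.ofReal.sub (hw_int.ofReal.const_mul _)
  obtain ⟨pφ1, pφ2⟩ := isPrim_re_im hi1 hφ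
  obtain ⟨pu1, pu2⟩ := isPrim_re_im hi2 hu
  have pg : IsPrim a b g g' := ⟨hg'int.mono_set Set.Ioc_subset_Icc_self, hgAC⟩
  have pf := (pφ1.mul hab pφ1).add hab (pφ2.mul hab pφ2)
  have pk := (pu1.mul hab pφ1).add hab (pu2.mul hab pφ2)
  set f : ℝ → ℝ := fun x => (φ x).re * (φ x).re + (φ x).im * (φ x).im with hf
  set k : ℝ → ℝ := fun x => (u x).re * (φ x).re + (u x).im * (φ x).im with hk
  set U : ℝ → ℝ := fun x => (u x).re * (u x).re + (u x).im * (u x).im with hU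
  have ef : (fun t => (u t / (p t : ℂ)).re * (φ t).re + (φ t).re * (u t / (p t : ℂ)).re +
      ((u t / (p t : ℂ)).im * (φ t).im + (φ t).im * (u t / (p t : ℂ)).im))
      = fun t => 2 * (1 / p t * k t) := by
    funext t
    simp only [Complex.div_ofReal_re, Complex.div_ofReal_im, hk]
    ring
  rw [ef] at pf
  have ek : (fun t => (((q t : ℂ) - (lam : ℂ) * (w t : ℂ)) * φ t).re * (φ t).re +
      (u t).re * (u t / (p t : ℂ)).re +
      ((((q t : ℂ) - (lam : ℂ) * (w t : ℂ)) * φ t).im * (φ t).im +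
      (u t).im * (u t / (p t : ℂ)).im))
      = fun t => 1 / p t * U t + q t * f t - lam * (w t * f t) := by
    funext t
    have e : ((q t : ℂ) - (lam : ℂ) * (w t : ℂ)) = ((q t - lam * w t : ℝ) : ℂ) := by push_cast; rfl
    rw [e]
    simp only [Complex.div_ofReal_re, Complex.div_ofReal_im, Complex.re_ofReal_mul,
      Complex.im_ofReal_mul, hf, hU]
    ring
  rw [ek] at pk
  have pgk := pg.mul hab pk
  have hfc : ContinuousOn f (Set.Icc a b) := pf.cont hab
  have hkc : ContinuousOn k (Set.Icc a b) := pk.cont hab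
  have hgc : ContinuousOn g (Set.Icc a b) := pg.cont hab
  have hUc : ContinuousOn U (Set.Icc a b) := by
    have c1 := pu1.cont hab
    have c2 := pu2.cont hab
    exact (c1.mul c1).add (c2.mul c2)
  have hf0 : ∀ x, 0 ≤ f x := fun x => add_nonneg (mul_self_nonneg _) (mul_self_nonneg _)
  have hU0 : ∀ x, 0 ≤ U x := fun x => add_nonneg (mul_self_nonneg _) (mul_self_nonneg _)
  have hkfU : ∀ x, k x ^ 2 ≤ f x * U x := fun x => by
    simp only [hf, hU, hk]
    nlinarith [sq_nonneg ((u x).re * (φ x).im - (u x).im * (φ x).re)]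
  have hkp := intOn_mul_cont hp_int hkc
  have hfp := intOn_mul_cont hp_int hfc
  have hUp := intOn_mul_cont hp_int hUc
  have hqf := intOn_mul_cont hq_int hfc
  have hwf := intOn_mul_cont hw_int hfc
  have hgqf := intOn_mul_cont hqf hgc
  have hgwf := intOn_mul_cont hwf hgc
  have hgU := intOn_mul_cont hUp hgc
  have hgk := intOn_mul_cont pg.1 hkc
  obtain ⟨x₀, hx₀, hmax⟩ := isCompact_Icc.exists_isMaxOn ⟨a, hac⟩ hfc
  have hM : ∀ x ∈ Set.Icc a b, f x ≤ f x₀ := fun x hx => hmax hx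
  have hM0 : 0 < f x₀ := by
    obtain ⟨x, hx, hxne⟩ := hne
    refine lt_of_lt_of_le ?_ (hM x hx)
    have := Complex.normSq_pos.2 hxne
    rwa [Complex.normSq_apply] at this
  have hbdd : BddAbove ((fun x => |g x|) '' Set.Icc a b) :=
    (isCompact_Icc.image_of_continuousOn hgc.abs).bddAbove
  have hka : k a = l * f a := by
    simp only [hk, hf, hua, Complex.re_ofReal_mul, Complex.im_ofReal_mul]; ring
  have hkb : k b = r * f b := by
    simp only [hk, hf, hub, Complex.re_ofReal_mul, Complex.im_ofReal_mul]; ring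
  have hI : ∀ᵐ x ∂(volume.restrict (Set.Ioc a b)), x ∈ Set.Icc a b := by
    filter_upwards [ae_restrict_mem measurableSet_Ioc] with x hx
    exact Set.Ioc_subset_Icc_self hx
  have hP0 : 0 < ∫ x in Set.Ioc a b, 1 / p x := by
    rw [integral_pos_iff_support_of_nonneg_ae (hp_pos.mono fun x hx => by
      simp only [Pi.zero_apply]; positivity) hp_int]
    have : (Function.support fun x => 1 / p x) =ᵐ[volume.restrict (Set.Ioc a b)] Set.univ := by
      filter_upwards [hp_pos] with x hx
      have : x ∈ (Function.support fun x => 1 / p x) := by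
        simp [hx.ne']
      exact propext ⟨fun _ => trivial, fun _ => this⟩
    rw [measure_congr this]
    simp [hab]
  have hosc : ∀ x ∈ Set.Icc a b, ∀ y ∈ Set.Icc a b,
      f x - f y ≤ 2 * ∫ t in Set.Ioc a b, |1 / p t * k t| := by
    intro x hx y hy
    rw [pf.2 x hx, pf.2 y hy, add_sub_add_left_eq_sub]
    have ii : ∀ z ∈ Set.Icc a b, IntervalIntegrable (fun t => 2 * (1 / p t * k t)) volume a z :=
      fun z hz => (intervalIntegrable_iff_integrableOn_Ioc_of_le hz.1).2 (pf.mono hz).1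
    rw [intervalIntegral.integral_interval_sub_left (ii x hx) (ii y hy)]
    refine (le_abs_self _).trans ?_
    have h1 := intervalIntegral.norm_integral_le_integral_norm_uIoc
      (f := fun t => 2 * (1 / p t * k t)) (a := y) (b := x) (μ := volume)
    refine h1.trans ?_
    have hsub : Set.uIoc y x ⊆ Set.Ioc a b := by
      intro z hz
      rcases Set.mem_uIoc.1 hz with h | h
      · exact ⟨hy.1.trans_lt h.1, h.2.trans hx.2⟩
      · exact ⟨hx.1.trans_lt h.1, h.2.trans hy.2⟩
    refine (setIntegral_mono_set pf.1.norm
      (Filter.Eventually.of_forall fun t => norm_nonneg _) hsub.eventuallyLE).trans (le_of_eq ?_)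
    rw [← integral_const_mul]
    refine integral_congr_ae (Filter.Eventually.of_forall fun t => ?_)
    simp only [Real.norm_eq_abs]
    rw [abs_mul, abs_two]
  have h1 : (∫ x in Set.Ioc a b, 1 / p x * U x) + (∫ x in Set.Ioc a b, q x * f x)
      - lam * (∫ x in Set.Ioc a b, w x * f x) = r * f b - l * f a := by
    have e := pk.2 b hbc
    rw [hka, hkb, intervalIntegral.integral_of_le hab.le,
      integral_sub (f := fun t => 1 / p t * U t + q t * f t) (hUp.add hqf) (hwf.const_mul _),
      integral_add hUp hqf, integral_const_mul] at e
    linarith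
  have h2 : (∫ x in Set.Ioc a b, g' x * k x) + (∫ x in Set.Ioc a b, q x * f x * g x)
      - lam * (∫ x in Set.Ioc a b, w x * f x * g x)
      + (∫ x in Set.Ioc a b, 1 / p x * U x * g x) = 0 := by
    have e := pgk.2 b hbc
    have e2 : ∀ t, g' t * k t + g t * (1 / p t * U t + q t * f t - lam * (w t * f t)) =
        g' t * k t + q t * f t * g t - lam * (w t * f t * g t) + 1 / p t * U t * g t := by
      intro t; ring
    simp only [hga, hgb, zero_mul, zero_add, e2] at e
    rw [intervalIntegral.integral_of_le hab.le,
      integral_add (f := fun t => g' t * k t + q t * f t * g t - lam * (w t * f t * g t))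
        ((hgk.add hgqf).sub (hgwf.const_mul _)) hgU,
      integral_sub (f := fun t => g' t * k t + q t * f t * g t) (hgk.add hgqf)
        (hgwf.const_mul _),
      integral_add hgk hgqf, integral_const_mul] at e
    exact e.symm
  have hfn : ∀ t, ‖φ t‖ ^ 2 = f t := fun t => by
    rw [Complex.sq_norm, Complex.normSq_apply]
  simp only [hfn] at hlamw
  -- the exceptional set
  set S : Set ℝ := {x | x ∈ Set.Icc a b ∧ p x * g x * w x < ε} with hS
  have hSm : MeasurableSet S := by
    have hgp : Continuous (fun x => g (Set.projIcc a b hab.le x)) :=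
      (continuousOn_iff_continuous_restrict.1 hgc).comp continuous_projIcc
    have : S = Set.Icc a b ∩ {x | p x * g (Set.projIcc a b hab.le x) * w x < ε} := by
      ext x
      constructor
      · rintro ⟨h1, h2⟩
        refine ⟨h1, ?_⟩
        simp only [Set.mem_setOf_eq, Set.projIcc_of_mem hab.le h1]
        exact h2
      · rintro ⟨h1, h2⟩
        simp only [Set.mem_setOf_eq, Set.projIcc_of_mem hab.le h1] at h2
        exact ⟨h1, h2⟩
    rw [this]
    exact measurableSet_Icc.inter
      (measurableSet_lt ((hpm.mul hgp.measurable).mul hwm) measurable_const)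
  have hSi : ∫ x in Set.Ioc a b, S.indicator (fun x => 1 / p x) x ≤ 1 / (2 * γ ^ 2) := by
    rw [integral_eq_lintegral_of_nonneg_ae]
    · refine ENNReal.toReal_le_of_le_ofReal (by positivity) (le_trans ?_ hεcond)
      rw [withDensity_apply _ hSm, ← lintegral_indicator hSm]
      refine (setLIntegral_le_lintegral _ _).trans (lintegral_mono fun x => ?_)
      by_cases hx : x ∈ S <;> simp [hx]
    · filter_upwards [hp_pos] with x hx
      simp only [Pi.zero_apply]
      exact Set.indicator_apply_nonneg fun _ => by positivity
    · exact (hp_int.indicator hSm).aestronglyMeasurable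
  simp only [intervalIntegral.integral_of_le hab.le] at hα hβ hγ hlamw ⊢
  rw [hc] at hα
  refine core_bound p q w f k U g g' (Set.Icc a b) hI hp_pos _ rfl hP0 hp_int hq_int hfp hUp hkp
    hqf hwf hgqf hgwf hgU hgk hg'2 hf0 hU0 hkfU lam l r (f a) (f b) α β γ (f x₀) _ hM hM0 x₀ hx₀ rfl
    (hf0 a) (hf0 b) (hM a hac) (hM b hbc) (fun x hx => le_csSup hbdd ⟨x, hx, rfl⟩) hosc hα hβ hγ
    h1 h2 hlamw ε hε S hSm ?_ hgw hSi
  filter_upwards [hI] with x hx hxS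
  by_contra hcon
  exact hxS ⟨hx, not_le.1 hcon⟩
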